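/- Let G be a finite simple graph with m edges such that f_2(G) ≥ m/2 + (1/4)·h(m) + 1/4. Then G admits a 2-partition (V_1, V_2) such that (i) max{e(V_1), e(V_2)} ≤ m/4 + (1/8)·h(m), and (ii) e(V_1, V_2) ≥ m/2 + (1/4)·h(m) + 1/4. -/

import Mathlib

open Finset

noncomputable def hfun (x : ℝ) : ℝ := Real.sqrt (2 * x + 1 / 4) - 1 / 2

variable {V : Type*} [Fintype V] [DecidableEq V]

/-- Number of edges of `G` with both endpoints in `S`. -/
def eIn (G : SimpleGraph V) [DecidableRel G.Adj] (S : Finset V) : ℕ :=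
  (Finset.univ.filter (fun p : V × V => G.Adj p.1 p.2 ∧ p.1 ∈ S ∧ p.2 ∈ S)).card / 2

/-- Number of edges of `G` with one endpoint in `S` and the other in `T` (for disjoint `S`, `T`). -/
def eCross (G : SimpleGraph V) [DecidableRel G.Adj] (S T : Finset V) : ℕ :=
  (Finset.univ.filter (fun p : V × V => G.Adj p.1 p.2 ∧ p.1 ∈ S ∧ p.2 ∈ T)).card

/-- `P` is a partition of the vertex set into `k` pairwise disjoint (possibly empty) parts. -/
def IsKPartition {k : ℕ} (P : Fin k → Finset V) : Prop :=
  (∀ i j : Fin k, i ≠ j → Disjoint (P i) (P j)) ∧ ∀ v : V, ∃ i, v ∈ P i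

/-- The number of crossing edges of a `k`-partition. -/
def crossTotal (G : SimpleGraph V) [DecidableRel G.Adj] {k : ℕ} (P : Fin k → Finset V) : ℕ :=
  ∑ i : Fin k, ∑ j : Fin k, if i < j then eCross G (P i) (P j) else 0

/-- `f_k(G)`: the maximum number of crossing edges over all `k`-partitions of `G`. -/
noncomputable def maxCut (G : SimpleGraph V) [DecidableRel G.Adj] (k : ℕ) : ℕ :=
  sSup {n : ℕ | ∃ P : Fin k → Finset V, IsKPartition P ∧ crossTotal G P = n}

section helpers

variable {W : Type*} [Fintype W] [DecidableEq W]

/-- degree of v into S -/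
def dg (G : SimpleGraph W) [DecidableRel G.Adj] (v : W) (S : Finset W) : ℕ :=
  ∑ y ∈ S, if G.Adj v y then 1 else 0

/-- ordered pair count -/
def EE (G : SimpleGraph W) [DecidableRel G.Adj] (S T : Finset W) : ℕ :=
  ∑ x ∈ S, dg G x T

theorem eCross_eq (G : SimpleGraph W) [DecidableRel G.Adj] (S T : Finset W) :
    eCross G S T = EE G S T := by
  unfold eCross EE dg
  rw [← Finset.sum_product', ← Finset.card_filter]
  congr 1
  ext p
  simp only [Finset.mem_filter, Finset.mem_univ, true_and, Finset.mem_product]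
  tauto

theorem eIn_le (G : SimpleGraph W) [DecidableRel G.Adj] (S : Finset W) :
    (eIn G S : ℝ) ≤ (EE G S S : ℝ) / 2 := by
  have h : eIn G S = EE G S S / 2 := by
    rw [← eCross_eq]; rfl
  rw [h]
  exact_mod_cast Nat.cast_div_le (α := ℝ) (m := EE G S S) (n := 2)

theorem EE_comm (G : SimpleGraph W) [DecidableRel G.Adj] (S T : Finset W) :
    EE G S T = EE G T S := by
  unfold EE dg
  rw [Finset.sum_comm]
  simp only [G.adj_comm]

theorem dg_insert (G : SimpleGraph W) [DecidableRel G.Adj] (x v : W) (S : Finset W)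
    (hv : v ∉ S) : dg G x (insert v S) = dg G x S + if G.Adj x v then 1 else 0 := by
  unfold dg
  rw [Finset.sum_insert hv, add_comm]

theorem EE_insert_left (G : SimpleGraph W) [DecidableRel G.Adj] (v : W) (S T : Finset W)
    (hv : v ∉ S) : EE G (insert v S) T = EE G S T + dg G v T := by
  unfold EE
  rw [Finset.sum_insert hv, add_comm]

theorem EE_insert_right (G : SimpleGraph W) [DecidableRel G.Adj] (v : W) (S T : Finset W)
    (hv : v ∉ T) : EE G S (insert v T) = EE G S T + dg G v S := by
  rw [EE_comm, EE_insert_left G v T S hv, EE_comm]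

theorem dg_insert_self (G : SimpleGraph W) [DecidableRel G.Adj] (v : W) (S : Finset W)
    (hv : v ∉ S) : dg G v (insert v S) = dg G v S := by
  rw [dg_insert G v v S hv]; simp

/-- moving a vertex -/
theorem move (G : SimpleGraph W) [DecidableRel G.Adj] (A : Finset W) (v : W) (hv : v ∈ A) :
    EE G (A.erase v) (A.erase v)ᶜ + dg G v Aᶜ = EE G A Aᶜ + dg G v A ∧
    EE G (A.erase v)ᶜ (A.erase v)ᶜ = EE G Aᶜ Aᶜ + 2 * dg G v Aᶜ := by
  obtain ⟨A', hA', rfl⟩ : ∃ A', v ∉ A' ∧ insert v A' = A :=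
    ⟨A.erase v, Finset.notMem_erase v A, Finset.insert_erase hv⟩
  rw [Finset.erase_insert hA']
  have hc : A'ᶜ = insert v (insert v A')ᶜ := by
    ext x; by_cases hx : x = v <;> simp [hx, hA']
  have hn : v ∉ (insert v A')ᶜ := by simp
  generalize (insert v A')ᶜ = B at *
  rw [hc, EE_insert_right G v _ _ hn, EE_insert_left G v _ _ hA',
    EE_insert_left G v _ _ hn, EE_insert_right G v _ _ hn, dg_insert_self G v A' hA',
    dg_insert_self G v B hn]
  constructor <;> ring

theorem total (G : SimpleGraph W) [DecidableRel G.Adj] (A : Finset W) :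
    2 * G.edgeFinset.card = EE G A A + EE G Aᶜ Aᶜ + 2 * EE G A Aᶜ := by
  rw [← G.sum_degrees_eq_twice_card_edges]
  have h : ∀ v, G.degree v = dg G v A + dg G v Aᶜ := by
    intro v
    unfold dg
    rw [Finset.sum_add_sum_compl, ← Finset.card_filter, ← G.card_neighborFinset_eq_degree,
      G.neighborFinset_eq_filter]
  simp only [h]
  rw [← Finset.sum_add_sum_compl A, Finset.sum_add_distrib, Finset.sum_add_distrib]
  have := EE_comm G A Aᶜ
  unfold EE at *
  omega

theorem dg_mono (G : SimpleGraph W) [DecidableRel G.Adj] (v : W) {S T : Finset W}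
    (h : S ⊆ T) : dg G v S ≤ dg G v T :=
  Finset.sum_le_sum_of_subset h

/-- key step -/
theorem key (G : SimpleGraph W) [DecidableRel G.Adj] (A : Finset W) (a : ℝ) (ha : 0 ≤ a)
    (hm : (EE G A A : ℝ) + EE G Aᶜ Aᶜ + 2 * EE G A Aᶜ = 4 * a ^ 2 + 2 * a)
    (hc : a ^ 2 + a + 1 / 4 ≤ (EE G A Aᶜ : ℝ))
    (h1 : a ^ 2 + a < (EE G A A : ℝ))
    (hd : ∀ v ∈ A, dg G v A ≤ dg G v Aᶜ) :
    ∃ v ∈ A, a ^ 2 + a + 1 / 4 ≤ (EE G A Aᶜ : ℝ) + dg G v A - dg G v Aᶜ ∧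
      (EE G Aᶜ Aᶜ : ℝ) + 2 * dg G v Aᶜ ≤ a ^ 2 + a := by
  by_contra! hcon
  obtain ⟨r, hr⟩ : ∃ r : ℝ, (EE G A A : ℝ) = a ^ 2 + a + 2 * r :=
    ⟨((EE G A A : ℝ) - (a ^ 2 + a)) / 2, by ring⟩
  obtain ⟨s, hs⟩ : ∃ s : ℝ, (EE G A Aᶜ : ℝ) = a ^ 2 + a + 1 / 4 + s :=
    ⟨(EE G A Aᶜ : ℝ) - (a ^ 2 + a + 1 / 4), by ring⟩
  have hr0 : 0 < r := by linarith
  have hs0 : 0 ≤ s := by linarith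
  have hbad : ∀ v ∈ A, (dg G v Aᶜ : ℝ) ≤ dg G v A + s → a + r + s + 1 / 4 < dg G v Aᶜ := by
    intro v hv h
    have := hcon v hv (by linarith)
    nlinarith
  have sA : (EE G A A : ℝ) = ∑ v ∈ A, (dg G v A : ℝ) := by unfold EE; push_cast; rfl
  have sB : (EE G A Aᶜ : ℝ) = ∑ v ∈ A, (dg G v Aᶜ : ℝ) := by unfold EE; push_cast; rfl
  have hdiff : ∑ v ∈ A, ((dg G v Aᶜ : ℝ) - dg G v A) = 1 / 4 + s - 2 * r := by
    rw [Finset.sum_sub_distrib, ← sA, ← sB]; linarith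
  have hdn : ∀ v ∈ A, (0 : ℝ) ≤ (dg G v Aᶜ : ℝ) - dg G v A := by
    intro v hv
    have : (dg G v A : ℝ) ≤ dg G v Aᶜ := by exact_mod_cast hd v hv
    linarith
  set N := A.filter (fun v => 0 < dg G v A) with hN
  have hNA : N ⊆ A := Finset.filter_subset _ _
  have hNB : ∑ v ∈ N, (dg G v Aᶜ : ℝ) ≤ EE G A Aᶜ := by
    rw [sB]
    exact Finset.sum_le_sum_of_subset_of_nonneg hNA (fun _ _ _ => Nat.cast_nonneg _)
  have adjN : ∀ v ∈ A, ∀ w ∈ A, G.Adj v w → w ∈ N := by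
    intro v hv w hw h
    refine Finset.mem_filter.2 ⟨hw, ?_⟩
    have : (if G.Adj w v then 1 else 0) ≤ dg G w A :=
      Finset.single_le_sum (f := fun y => if G.Adj w y then 1 else 0) (fun _ _ => Nat.zero_le _) hv
    rw [if_pos h.symm] at this
    exact this
  have cardN : ∀ v ∈ N, dg G v A + 1 ≤ N.card := by
    intro v hv
    have hvA := hNA hv
    have e : dg G v A = (A.filter (fun y => G.Adj v y)).card := by
      rw [Finset.card_filter]; rfl
    have hnot : v ∉ A.filter (fun y => G.Adj v y) := by simp
    rw [e, ← Finset.card_insert_of_notMem hnot]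
    apply Finset.card_le_card
    intro w hw
    rcases Finset.mem_insert.1 hw with rfl | hw
    · exact hv
    · exact adjN v hvA w (Finset.mem_filter.1 hw).1 (Finset.mem_filter.1 hw).2
  by_cases hex : ∃ u ∈ N, (dg G u A : ℝ) + s < dg G u Aᶜ
  · obtain ⟨u, huN, hu⟩ := hex
    have huA := hNA huN
    have hu1 : (1 : ℝ) ≤ dg G u A := by exact_mod_cast (Finset.mem_filter.1 huN).2
    have hu2 : (dg G u A : ℝ) + 1 ≤ dg G u Aᶜ := by
      have : (dg G u A : ℝ) < dg G u Aᶜ := by linarith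
      exact_mod_cast this
    have hus : (dg G u Aᶜ : ℝ) - dg G u A ≤ 1 / 4 + s - 2 * r := by
      rw [← hdiff]
      exact Finset.single_le_sum (f := fun v => (dg G v Aᶜ : ℝ) - dg G v A) hdn huA
    have hoth : ∀ v ∈ N, v ≠ u → a + r + s + 1 / 4 < dg G v Aᶜ ∧ dg G v Aᶜ ≤ dg G v A := by
      intro v hv hvu
      have hvA := hNA hv
      have hp : ∑ w ∈ ({u, v} : Finset W), ((dg G w Aᶜ : ℝ) - dg G w A) ≤ 1 / 4 + s - 2 * r := by
        rw [← hdiff]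
        apply Finset.sum_le_sum_of_subset_of_nonneg
        · intro w hw
          rcases Finset.mem_insert.1 hw with rfl | hw
          · exact huA
          · rw [Finset.mem_singleton.1 hw]; exact hvA
        · intro w hw _; exact hdn w hw
      rw [Finset.sum_pair hvu.symm] at hp
      have : (dg G v Aᶜ : ℝ) < dg G v A + 1 := by linarith
      have h2 : dg G v Aᶜ < dg G v A + 1 := by exact_mod_cast this
      have h3 : (dg G v Aᶜ : ℝ) ≤ dg G v A := by exact_mod_cast Nat.lt_succ_iff.1 h2
      exact ⟨hbad v hvA (by linarith), Nat.lt_succ_iff.1 h2⟩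
    obtain ⟨v, hvA, huv⟩ : ∃ v ∈ A, G.Adj u v := by
      by_contra! hno
      have : dg G u A = 0 := Finset.sum_eq_zero (fun y hy => if_neg (hno y hy))
      rw [this] at hu1; norm_num at hu1
    have hvN := adjN u huA v hvA huv
    obtain ⟨hv1, hv2⟩ := hoth v hvN huv.ne'
    have hv2' : (dg G v Aᶜ : ℝ) ≤ dg G v A := by exact_mod_cast hv2
    have hcard : dg G v A ≤ (N.erase u).card := by
      rw [Finset.card_erase_of_mem huN]
      have := cardN v hvN
      omega
    have hcard' : (dg G v A : ℝ) ≤ (N.erase u).card := by exact_mod_cast hcard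
    have hsum : ((N.erase u).card : ℝ) * (a + r + s + 1 / 4) ≤ ∑ w ∈ N.erase u, (dg G w Aᶜ : ℝ) := by
      rw [← nsmul_eq_mul]
      apply Finset.card_nsmul_le_sum
      intro w hw
      exact (hoth w (Finset.mem_of_mem_erase hw) (Finset.ne_of_mem_erase hw)).1.le
    rw [← Finset.add_sum_erase N _ huN] at hNB
    have hB : 0 < a + r + s + 1 / 4 := by linarith
    have h5 : (a + r + s + 1 / 4) * (a + r + s + 1 / 4) ≤ ((N.erase u).card : ℝ) * (a + r + s + 1 / 4) :=
      mul_le_mul_of_nonneg_right (by linarith) hB.le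
    have h6 : (a + 1 / 2) * (a + 1 / 2) ≤ (a + r + s + 1 / 4) * (a + r + s + 1 / 4) :=
      mul_self_le_mul_self (by linarith) (by linarith)
    nlinarith
  · push Not at hex
    obtain ⟨v, hvN⟩ : N.Nonempty := by
      by_contra hne
      rw [Finset.not_nonempty_iff_eq_empty] at hne
      have : EE G A A = 0 := by
        apply Finset.sum_eq_zero
        intro v hv
        by_contra h0
        have : v ∈ N := Finset.mem_filter.2 ⟨hv, Nat.pos_of_ne_zero h0⟩
        rw [hne] at this
        simp at this
      rw [this] at h1
      push_cast at h1
      nlinarith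
    have hv := hbad v (hNA hvN) (hex v hvN)
    have hv2 := hex v hvN
    have hcard : (dg G v A : ℝ) + 1 ≤ N.card := by exact_mod_cast cardN v hvN
    have hsum : (N.card : ℝ) * (a + r + s + 1 / 4) ≤ ∑ w ∈ N, (dg G w Aᶜ : ℝ) := by
      rw [← nsmul_eq_mul]
      apply Finset.card_nsmul_le_sum
      intro w hw
      exact (hbad w (hNA hw) (hex w hw)).le
    have h5 : (a + 1) * (a + r + s + 1 / 4) ≤ (N.card : ℝ) * (a + r + s + 1 / 4) :=
      mul_le_mul_of_nonneg_right (by linarith) (by linarith)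
    nlinarith [mul_nonneg ha hs0, mul_nonneg ha hr0.le]

theorem descend (G : SimpleGraph W) [DecidableRel G.Adj] (a : ℝ) (ha : 0 ≤ a)
    (hm : 2 * (G.edgeFinset.card : ℝ) = 4 * a ^ 2 + 2 * a) (n : ℕ) :
    ∀ A : Finset W, A.card = n →
    a ^ 2 + a + 1 / 4 ≤ (EE G A Aᶜ : ℝ) →
    (EE G Aᶜ Aᶜ : ℝ) ≤ a ^ 2 + a →
    (∀ v ∈ A, dg G v A ≤ dg G v Aᶜ) →
    ∃ A : Finset W, a ^ 2 + a + 1 / 4 ≤ (EE G A Aᶜ : ℝ) ∧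
      (EE G Aᶜ Aᶜ : ℝ) ≤ a ^ 2 + a ∧ (EE G A A : ℝ) ≤ a ^ 2 + a := by
  induction n with
  | zero =>
    intro A hA hc h2 hd
    refine ⟨A, hc, h2, ?_⟩
    rw [Finset.card_eq_zero.1 hA]
    simp only [EE, Finset.sum_empty, Nat.cast_zero]
    positivity
  | succ n ih =>
    intro A hA hc h2 hd
    by_cases h1 : (EE G A A : ℝ) ≤ a ^ 2 + a
    · exact ⟨A, hc, h2, h1⟩
    · have ht : 2 * (G.edgeFinset.card : ℝ) = EE G A A + EE G Aᶜ Aᶜ + 2 * EE G A Aᶜ := by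
        exact_mod_cast total G A
      obtain ⟨v, hv, hv1, hv2⟩ := key G A a ha (by linarith) hc (not_le.1 h1) hd
      obtain ⟨m1, m2⟩ := move G A v hv
      have m1' : (EE G (A.erase v) (A.erase v)ᶜ : ℝ) + dg G v Aᶜ = EE G A Aᶜ + dg G v A := by
        exact_mod_cast m1
      have m2' : (EE G (A.erase v)ᶜ (A.erase v)ᶜ : ℝ) = EE G Aᶜ Aᶜ + 2 * dg G v Aᶜ := by
        exact_mod_cast m2
      refine ih (A.erase v) (by rw [Finset.card_erase_of_mem hv, hA]; rfl) (by linarith)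
        (by linarith) ?_
      intro w hw
      have hs : A.erase v ⊆ A := Finset.erase_subset _ _
      exact (dg_mono G w hs).trans ((hd w (hs hw)).trans
        (dg_mono G w (Finset.compl_subset_compl.2 hs)))

theorem crossTotal_two (G : SimpleGraph W) [DecidableRel G.Adj] (P : Fin 2 → Finset W) :
    crossTotal G P = EE G (P 0) (P 1) := by
  simp [crossTotal, Fin.sum_univ_two, eCross_eq]

theorem part_two (A : Finset W) : IsKPartition ![A, Aᶜ] := by
  constructor
  · intro i j hij
    fin_cases i <;> fin_cases j <;> simp_all [disjoint_compl_right, disjoint_compl_left]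
  · intro v
    by_cases h : v ∈ A
    · exact ⟨0, by simpa using h⟩
    · exact ⟨1, by simpa using h⟩

theorem part_compl (P : Fin 2 → Finset W) (h : IsKPartition P) : P 1 = (P 0)ᶜ := by
  ext v
  have h1 : v ∈ P 0 → v ∉ P 1 := fun hv => Finset.disjoint_left.1 (h.1 0 1 (by decide)) hv
  have h2 := h.2 v
  simp only [Fin.exists_fin_two] at h2
  simp only [Finset.mem_compl]
  tauto

theorem maxCut_le (G : SimpleGraph W) [DecidableRel G.Adj] (K : ℕ)
    (h : ∀ A, EE G A Aᶜ ≤ K) : maxCut G 2 ≤ K := by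
  apply csSup_le
  · exact ⟨_, _, part_two ∅, rfl⟩
  · rintro n ⟨P, hP, rfl⟩
    rw [crossTotal_two, part_compl P hP]
    exact h _

end helpers

/-- If `f₂(G) ≥ m/2 + h(m)/4 + 1/4`, then `G` has a 2-partition with
`max{e(V₁),e(V₂)} ≤ m/4 + h(m)/8` and `e(V₁,V₂) ≥ m/2 + h(m)/4 + 1/4`. -/
theorem stmt_9 {V : Type*} [Fintype V] [DecidableEq V]
    (G : SimpleGraph V) [DecidableRel G.Adj] (m : ℕ) (hm : m = G.edgeFinset.card)
    (hcut : (m : ℝ) / 2 + (1 / 4) * hfun m + 1 / 4 ≤ (maxCut G 2 : ℝ)) :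
    ∃ P : Fin 2 → Finset V, IsKPartition P ∧
      (∀ i : Fin 2, (eIn G (P i) : ℝ) ≤ (m : ℝ) / 4 + (1 / 8) * hfun m) ∧
      (m : ℝ) / 2 + (1 / 4) * hfun m + 1 / 4 ≤ (crossTotal G P : ℝ) := by
  have hsq : Real.sqrt (2 * (m : ℝ) + 1 / 4) ^ 2 = 2 * (m : ℝ) + 1 / 4 :=
    Real.sq_sqrt (by positivity)
  have hge : (1 / 2 : ℝ) ≤ Real.sqrt (2 * (m : ℝ) + 1 / 4) := by
    apply Real.le_sqrt_of_sq_le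
    have : (0 : ℝ) ≤ m := Nat.cast_nonneg m
    linarith
  obtain ⟨a, ha⟩ : ∃ a : ℝ, hfun m = 2 * a := ⟨hfun m / 2, by ring⟩
  have ha' : Real.sqrt (2 * (m : ℝ) + 1 / 4) = 2 * a + 1 / 2 := by
    rw [← ha]; unfold hfun; ring
  rw [ha'] at hsq hge
  have ha0 : 0 ≤ a := by linarith
  have hm2 : (m : ℝ) = 2 * a ^ 2 + a := by nlinarith
  have hmG : 2 * (G.edgeFinset.card : ℝ) = 4 * a ^ 2 + 2 * a := by
    rw [← hm, hm2]; ring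
  obtain ⟨A, -, hmax⟩ := Finset.exists_max_image (Finset.univ : Finset (Finset V))
    (fun A => EE G A Aᶜ) Finset.univ_nonempty
  have hmax' : ∀ A', EE G A' A'ᶜ ≤ EE G A Aᶜ := fun A' => hmax A' (Finset.mem_univ _)
  have hcA : a ^ 2 + a + 1 / 4 ≤ (EE G A Aᶜ : ℝ) := by
    have h1 : (maxCut G 2 : ℝ) ≤ EE G A Aᶜ := by exact_mod_cast maxCut_le G _ hmax'
    rw [ha, hm2] at hcut
    linarith
  have gen : ∀ B : Finset V, EE G B Bᶜ = EE G A Aᶜ → (EE G Bᶜ Bᶜ : ℝ) ≤ a ^ 2 + a →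
      ∃ A : Finset V, a ^ 2 + a + 1 / 4 ≤ (EE G A Aᶜ : ℝ) ∧
      (EE G Aᶜ Aᶜ : ℝ) ≤ a ^ 2 + a ∧ (EE G A A : ℝ) ≤ a ^ 2 + a := by
    intro B hB h2
    refine descend G a ha0 hmG _ B rfl (by rw [hB]; exact hcA) h2 ?_
    intro v hv
    have := (move G B v hv).1
    have := hmax' (B.erase v)
    omega
  have hex : ∃ A : Finset V, a ^ 2 + a + 1 / 4 ≤ (EE G A Aᶜ : ℝ) ∧
      (EE G Aᶜ Aᶜ : ℝ) ≤ a ^ 2 + a ∧ (EE G A A : ℝ) ≤ a ^ 2 + a := by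
    by_cases h2 : (EE G Aᶜ Aᶜ : ℝ) ≤ a ^ 2 + a
    · exact gen A rfl h2
    · have ht : 2 * (G.edgeFinset.card : ℝ) = EE G A A + EE G Aᶜ Aᶜ + 2 * EE G A Aᶜ := by
        exact_mod_cast total G A
      apply gen Aᶜ
      · rw [compl_compl, EE_comm]
      · rw [compl_compl]
        nlinarith
  obtain ⟨S, h1, h2, h3⟩ := hex
  refine ⟨![S, Sᶜ], part_two S, ?_, ?_⟩
  · rw [ha, hm2, Fin.forall_fin_two]
    have e1 := eIn_le G S
    have e2 := eIn_le G Sᶜ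
    constructor
    · change (eIn G S : ℝ) ≤ _
      linarith
    · change (eIn G Sᶜ : ℝ) ≤ _
      linarith
  · rw [crossTotal_two, ha, hm2]
    change _ ≤ (EE G S Sᶜ : ℝ)
    linarith
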